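/- There exists a 2-(24,4,1) packing with 42 blocks whose leave is a vertex-disjoint union of three cycles of length 3 and three cycles of length 5, covering all 24 points (leave type 3^3 5^3). -/

import Mathlib

/-- A 2-(24,4,1) packing: a collection of 4-element blocks on 24 points such that
every pair of distinct points lies in at most one block. -/
def IsPacking (B : Finset (Finset (Fin 24))) : Prop :=
  (∀ b ∈ B, b.card = 4) ∧
  ∀ p q : Fin 24, p ≠ q → ∀ b₁ ∈ B, ∀ b₂ ∈ B,
    p ∈ b₁ → q ∈ b₁ → p ∈ b₂ → q ∈ b₂ → b₁ = b₂

/-- Adjacency in the leave of a packing: the pair of distinct points is covered by no block. -/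
def LeaveAdj (B : Finset (Finset (Fin 24))) (p q : Fin 24) : Prop :=
  p ≠ q ∧ ∀ b ∈ B, ¬ (p ∈ b ∧ q ∈ b)

/-- The leave of the packing `B` is a vertex-disjoint union of cycles whose lengths are
given by the list `L`, covering all 24 points. -/
def LeaveIsCycleType (B : Finset (Finset (Fin 24))) (L : List ℕ) : Prop :=
  ∃ f : (i : Fin L.length) → ZMod (L.get i) → Fin 24,
    Function.Bijective (fun x : Σ i : Fin L.length, ZMod (L.get i) => f x.1 x.2) ∧
    ∀ p q : Fin 24, LeaveAdj B p q ↔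
      ∃ i k, (p = f i k ∧ q = f i (k + 1)) ∨ (q = f i k ∧ p = f i (k + 1))

/-!
The packing comes from Bose's method of mixed differences over `ZMod 3`. Label the points by
`ZMod 3 × (ZMod 3 ⊕ ZMod 5)`, so that translating the first coordinate rotates three triangles and
permutes three pentagons cyclically. The 14 base blocks have `14 * 12 = 168` mixed differences,
which are distinct, so at most one of their 42 translates goes through any two points. The 16 mixed
differences of distinct points that do not occur are `±1` within a column `inl t` and `0` between
the columns `inr s` and `inr (s ± 1)`; they are the ones along the triangles and the pentagons.
-/

section Relabel

variable {α : Type*} (e : α ≃ Fin 24)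

/-- The block collection on `Fin 24` obtained from `B` by renaming the points along `e`. -/
def relabel (B : Finset (Finset α)) : Finset (Finset (Fin 24)) :=
  B.map e.finsetCongr.toEmbedding

variable {B : Finset (Finset α)}

lemma isPacking_relabel (hcard : ∀ b ∈ B, b.card = 4)
    (hunique : ∀ p q, p ≠ q → ∀ b ∈ B, ∀ c ∈ B, p ∈ b → q ∈ b → p ∈ c → q ∈ c → b = c) :
    IsPacking (relabel e B) := by
  simp only [IsPacking, relabel, Finset.forall_mem_map]
  refine ⟨fun b hb => (Finset.card_map _).trans (hcard b hb), fun p q hpq b hb c hc => ?_⟩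
  simp only [Equiv.coe_toEmbedding, Equiv.finsetCongr_apply, Finset.mem_map_equiv]
  exact fun hpb hqb hpc hqc =>
    congrArg _ (hunique _ _ (e.symm.injective.ne hpq) b hb c hc hpb hqb hpc hqc)

lemma leaveAdj_relabel {p q : α} :
    LeaveAdj (relabel e B) (e p) (e q) ↔ p ≠ q ∧ ∀ b ∈ B, ¬ (p ∈ b ∧ q ∈ b) := by
  unfold LeaveAdj relabel
  rw [Finset.forall_mem_map]
  simp only [Equiv.coe_toEmbedding, Equiv.finsetCongr_apply, Finset.mem_map_equiv,
    Equiv.symm_apply_apply, e.injective.ne_iff]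

lemma leaveIsCycleType_relabel {L : List ℕ} {succ : α → α}
    {f : (i : Fin L.length) → ZMod (L.get i) → α}
    (hf : Function.Bijective fun x : Σ i : Fin L.length, ZMod (L.get i) => f x.1 x.2)
    (hsucc : ∀ i k, f i (k + 1) = succ (f i k))
    (hleave : ∀ p q, (p ≠ q ∧ ∀ b ∈ B, ¬ (p ∈ b ∧ q ∈ b)) ↔ q = succ p ∨ p = succ q) :
    LeaveIsCycleType (relabel e B) L := by
  refine ⟨fun i k => e (f i k), e.bijective.comp hf, ?_⟩
  have edge_iff (p q : α) : q = succ p ↔ ∃ i k, p = f i k ∧ q = f i (k + 1) := by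
    constructor
    · rintro rfl
      obtain ⟨⟨i, k⟩, rfl⟩ := hf.surjective p
      exact ⟨i, k, rfl, (hsucc i k).symm⟩
    · rintro ⟨i, k, rfl, rfl⟩
      exact hsucc i k
  refine e.surjective.forall₂.mpr fun p q => ?_
  simp only [leaveAdj_relabel, hleave, edge_iff, e.apply_eq_iff_eq, exists_or]

end Relabel

section MixedDifferences

variable {G I ι κ : Type*} [AddGroup G]

/-- Translation by `g` on the point set `G × I`, which consists of a copy of `G` for each
column `i : I`. -/
def shift (g : G) : G × I ≃ G × I :=
  (Equiv.addRight g).prodCongr (Equiv.refl I)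

/-- The mixed difference of an ordered pair of points, tagged by the columns of both points. -/
def mixedDifference (p q : G × I) : I × I × G :=
  (p.2, q.2, q.1 - p.1)

lemma mixedDifference_eq_iff {p q p' q' : G × I} :
    mixedDifference p q = mixedDifference p' q' ↔ ∃ g, shift g p = p' ∧ shift g q = q' := by
  constructor
  · intro h
    simp only [mixedDifference, Prod.mk.injEq, sub_eq_iff_eq_add] at h
    obtain ⟨hp, hq, hdiff⟩ := h
    refine ⟨-p.1 + p'.1, Prod.ext (add_neg_cancel_left _ _) hp, Prod.ext ?_ hq⟩
    simp [shift, hdiff, add_assoc]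
  · rintro ⟨g, rfl, rfl⟩
    simp [mixedDifference, shift]

/-- No mixed difference arises twice from ordered pairs of different entries of the base blocks
`D i`. A base block is listed as a family of points indexed by `κ`. -/
def HasDistinctDifferences (D : ι → κ → G × I) : Prop :=
  ∀ i x y, x ≠ y → ∀ j z w, z ≠ w →
    mixedDifference (D i x) (D i y) = mixedDifference (D j z) (D j w) → (i, x, y) = (j, z, w)

lemma HasDistinctDifferences.injective {D : ι → κ → G × I} (hD : HasDistinctDifferences D)
    (i : ι) : Function.Injective (D i) := by
  intro x y hxy
  by_contra hne
  have hdiff : mixedDifference (D i x) (D i y) = mixedDifference (D i y) (D i x) := by rw [hxy]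
  exact hne (congrArg (·.2.1) (hD i x y hne i y x (Ne.symm hne) hdiff))

variable [Fintype κ] [DecidableEq G] [DecidableEq I] {D : ι → κ → G × I} {p q : G × I}

/-- The translate by `a.2` of the base block with index `a.1`. -/
def developedBlock (D : ι → κ → G × I) (a : ι × G) : Finset (G × I) :=
  Finset.univ.image fun x => shift a.2 (D a.1 x)

lemma mem_developedBlock {a : ι × G} :
    p ∈ developedBlock D a ↔ ∃ x, shift a.2 (D a.1 x) = p := by
  simp only [developedBlock, Finset.mem_image, Finset.mem_univ, true_and]

lemma exists_mem_developedBlock_iff :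
    (∃ a, p ∈ developedBlock D a ∧ q ∈ developedBlock D a) ↔
      ∃ i x y, mixedDifference (D i x) (D i y) = mixedDifference p q := by
  simp only [mem_developedBlock, mixedDifference_eq_iff]
  constructor
  · rintro ⟨⟨i, g⟩, ⟨x, hp⟩, y, hq⟩
    exact ⟨i, x, y, g, hp, hq⟩
  · rintro ⟨i, x, y, g, hp, hq⟩
    exact ⟨⟨i, g⟩, ⟨x, hp⟩, y, hq⟩

namespace HasDistinctDifferences

lemma card_developedBlock (hD : HasDistinctDifferences D) (a : ι × G) :
    (developedBlock D a).card = Fintype.card κ :=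
  Finset.card_image_of_injective _ ((shift a.2).injective.comp (hD.injective a.1))

lemma eq_of_mem_developedBlock (hD : HasDistinctDifferences D) (hpq : p ≠ q) {a b : ι × G}
    (hpa : p ∈ developedBlock D a) (hqa : q ∈ developedBlock D a)
    (hpb : p ∈ developedBlock D b) (hqb : q ∈ developedBlock D b) : a = b := by
  obtain ⟨i, g⟩ := a
  obtain ⟨j, h⟩ := b
  obtain ⟨x, rfl⟩ := mem_developedBlock.mp hpa
  obtain ⟨y, rfl⟩ := mem_developedBlock.mp hqa
  obtain ⟨z, hz⟩ := mem_developedBlock.mp hpb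
  obtain ⟨w, hw⟩ := mem_developedBlock.mp hqb
  have hxy : x ≠ y := by
    rintro rfl
    exact hpq rfl
  have hzw : z ≠ w := by
    rintro rfl
    exact hpq (hz.symm.trans hw)
  have hdiff : mixedDifference (D i x) (D i y) = mixedDifference (D j z) (D j w) :=
    (mixedDifference_eq_iff.mpr ⟨g, rfl, rfl⟩).trans (mixedDifference_eq_iff.mpr ⟨h, hz, hw⟩).symm
  obtain ⟨rfl, rfl, rfl⟩ : i = j ∧ x = z ∧ y = w := by
    simpa only [Prod.mk.injEq] using hD i x y hxy j z w hzw hdiff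
  have hgh : h = g := add_left_cancel (congrArg Prod.fst hz)
  rw [hgh]

lemma developedBlock_injective [Nontrivial κ] (hD : HasDistinctDifferences D) :
    Function.Injective (developedBlock D) := by
  intro a b hab
  have hcard : 1 < (developedBlock D a).card := by
    rw [hD.card_developedBlock]
    exact Fintype.one_lt_card
  obtain ⟨p, hp, q, hq, hpq⟩ := Finset.one_lt_card.mp hcard
  exact hD.eq_of_mem_developedBlock hpq hp hq (hab ▸ hp) (hab ▸ hq)

end HasDistinctDifferences

variable [Fintype G] [Fintype ι]

/-- The collection of all translates of the base blocks `D`. -/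
def development (D : ι → κ → G × I) : Finset (Finset (G × I)) :=
  Finset.univ.image (developedBlock D)

lemma HasDistinctDifferences.card_development [Nontrivial κ] (hD : HasDistinctDifferences D) :
    (development D).card = Fintype.card ι * Fintype.card G := by
  rw [development, Finset.card_image_of_injective _ hD.developedBlock_injective,
    Finset.card_univ, Fintype.card_prod]

lemma HasDistinctDifferences.isPacking_development (hD : HasDistinctDifferences D)
    (hκ : Fintype.card κ = 4) (e : G × I ≃ Fin 24) :
    IsPacking (relabel e (development D)) := by
  apply isPacking_relabel <;>
    simp only [development, Finset.forall_mem_image, Finset.mem_univ, forall_const]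
  · exact fun a => (hD.card_developedBlock a).trans hκ
  · exact fun p q hpq a b hpa hqa hpb hqb =>
      congrArg _ (hD.eq_of_mem_developedBlock hpq hpa hqa hpb hqb)

lemma uncovered_development_iff :
    (∀ b ∈ development D, ¬ (p ∈ b ∧ q ∈ b)) ↔
      ¬ ∃ i x y, mixedDifference (D i x) (D i y) = mixedDifference p q := by
  rw [← exists_mem_developedBlock_iff]
  simp only [development, Finset.forall_mem_image, Finset.mem_univ, forall_const, not_exists]

end MixedDifferences

/-- The points of the packing. The `k`-th vertex of the `t`-th triangle of the leave is
`(k, .inl t)`, and the `k`-th vertex of its `t`-th pentagon is `(t, .inr k)`. -/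
abbrev Point : Type := ZMod 3 × (ZMod 3 ⊕ ZMod 5)

/-- Base blocks over `ZMod 3` whose development is the packing. -/
def baseBlock : Fin 14 → Fin 4 → Point :=
  ![![(0, .inl 0), (0, .inl 1), (0, .inr 4), (1, .inr 4)],
    ![(0, .inl 0), (1, .inl 1), (0, .inr 3), (2, .inr 1)],
    ![(0, .inl 0), (2, .inl 1), (2, .inl 2), (1, .inr 1)],
    ![(0, .inl 0), (0, .inl 2), (0, .inr 1), (1, .inr 0)],
    ![(0, .inl 0), (1, .inl 2), (2, .inr 2), (2, .inr 4)],
    ![(0, .inl 0), (0, .inr 0), (1, .inr 3), (2, .inr 0)],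
    ![(0, .inl 0), (0, .inr 2), (1, .inr 2), (2, .inr 3)],
    ![(0, .inl 1), (1, .inl 2), (0, .inr 0), (1, .inr 2)],
    ![(0, .inl 1), (2, .inl 2), (0, .inr 3), (1, .inr 3)],
    ![(0, .inl 1), (0, .inr 1), (2, .inr 0), (2, .inr 2)],
    ![(0, .inl 1), (0, .inr 2), (1, .inr 0), (2, .inr 4)],
    ![(0, .inl 2), (0, .inr 0), (0, .inr 3), (2, .inr 4)],
    ![(0, .inl 2), (0, .inr 4), (1, .inr 1), (2, .inr 2)],
    ![(0, .inr 1), (0, .inr 3), (1, .inr 1), (1, .inr 4)]]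

/-- The successor of a point on its cycle in the leave. -/
def cycleSucc : Point → Point
  | (k, .inl t) => (k + 1, .inl t)
  | (t, .inr k) => (t, .inr (k + 1))

/-- The `k`-th vertex of the `i`-th cycle of the leave. -/
def cycleVertex : (i : Fin [3, 3, 3, 5, 5, 5].length) → ZMod ([3, 3, 3, 5, 5, 5].get i) → Point
  | 0, k => (k, .inl 0)
  | 1, k => (k, .inl 1)
  | 2, k => (k, .inl 2)
  | 3, k => (0, .inr k)
  | 4, k => (1, .inr k)
  | 5, k => (2, .inr k)

lemma hasDistinctDifferences_baseBlock : HasDistinctDifferences baseBlock := by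
  unfold HasDistinctDifferences
  decide +kernel

lemma cycleSucc_shift (g : ZMod 3) (p : Point) :
    cycleSucc (shift g p) = shift g (cycleSucc p) := by
  obtain ⟨k, t | s⟩ := p
  · exact Prod.ext (add_right_comm k g 1) rfl
  · rfl

lemma uncovered_iff_cycleSucc_of_zero : ∀ (c : ZMod 3 ⊕ ZMod 5) (q : Point),
    ((0, c) ≠ q ∧ ¬ ∃ i x y,
      mixedDifference (baseBlock i x) (baseBlock i y) = mixedDifference (0, c) q) ↔
      q = cycleSucc (0, c) ∨ (0, c) = cycleSucc q := by
  decide +kernel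

lemma uncovered_iff_cycleSucc (p q : Point) :
    (p ≠ q ∧ ¬ ∃ i x y,
      mixedDifference (baseBlock i x) (baseBlock i y) = mixedDifference p q) ↔
      q = cycleSucc p ∨ p = cycleSucc q := by
  obtain ⟨g, c⟩ := p
  obtain ⟨q, rfl⟩ := (shift g).surjective q
  have hp : (g, c) = shift g (0, c) := Prod.ext (zero_add g).symm rfl
  have hdiff : mixedDifference (shift g (0, c)) (shift g q) = mixedDifference (0, c) q :=
    (mixedDifference_eq_iff.mpr ⟨g, rfl, rfl⟩).symm
  simp only [hp, hdiff, cycleSucc_shift, (shift g).injective.ne_iff, (shift g).apply_eq_iff_eq,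
    uncovered_iff_cycleSucc_of_zero]

lemma cycleVertex_add_one : ∀ i k, cycleVertex i (k + 1) = cycleSucc (cycleVertex i k)
  | 0, _ | 1, _ | 2, _ | 3, _ | 4, _ | 5, _ => rfl

lemma cycleVertex_bijective : Function.Bijective
    fun x : Σ i : Fin [3, 3, 3, 5, 5, 5].length, ZMod ([3, 3, 3, 5, 5, 5].get i) =>
      cycleVertex x.1 x.2 := by
  have neZero_length (i : Fin [3, 3, 3, 5, 5, 5].length) : NeZero ([3, 3, 3, 5, 5, 5].get i) :=
    ⟨by revert i; decide⟩
  refine Function.Surjective.bijective_of_nat_card_le ?surjective ?card_le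
  case surjective =>
    rintro ⟨k, t | s⟩
    · fin_cases t
      exacts [⟨⟨0, k⟩, rfl⟩, ⟨⟨1, k⟩, rfl⟩, ⟨⟨2, k⟩, rfl⟩]
    · fin_cases k
      exacts [⟨⟨3, s⟩, rfl⟩, ⟨⟨4, s⟩, rfl⟩, ⟨⟨5, s⟩, rfl⟩]
  case card_le =>
    simp only [Nat.card_sigma, Nat.card_zmod, Nat.card_eq_fintype_card (α := Point)]
    decide

/-- There is a 2-(24,4,1) packing with 42 blocks whose leave is a vertex-disjoint
union of cycles of lengths [3, 3, 3, 5, 5, 5], covering all 24 points. -/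
theorem exists_max_packing_with_leave_type :
    ∃ B : Finset (Finset (Fin 24)), IsPacking B ∧ B.card = 42 ∧
      LeaveIsCycleType B [3, 3, 3, 5, 5, 5] := by
  let e : Point ≃ Fin 24 := Fintype.equivFinOfCardEq rfl
  have hD : HasDistinctDifferences baseBlock := hasDistinctDifferences_baseBlock
  refine ⟨relabel e (development baseBlock), hD.isPacking_development rfl e, ?_, ?_⟩
  · rw [relabel, Finset.card_map, hD.card_development]
    rfl
  · refine leaveIsCycleType_relabel e cycleVertex_bijective cycleVertex_add_one fun p q => ?_
    rw [uncovered_development_iff, uncovered_iff_cycleSucc]
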